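/- Let c > 0, let t₀ ∈ ℝ, and let Y : ℝ → EuclideanSpace ℝ (Fin 3) be a differentiable unit-speed curve on the unit sphere, i.e. ‖Y(t)‖ = 1 and ‖Y'(t)‖ = 1 for all t. Define β(t) = c·sec(t + t₀)·Y(t) on an open interval where cos(t + t₀) > 0. Then for all t in that interval: (a) ‖β'(t)‖ = c·sec²(t + t₀); and (b) the component of β(t) orthogonal to β'(t) has constant norm c, i.e. ‖β(t)‖² − (⟨β(t), β'(t)⟩²)/‖β'(t)‖² = c². -/

import Mathlib

open Real RealInnerProductSpace

/-!
Write `β = r • Y` with `r = c * sec θ` and `θ = t + t₀`. As `r' = r * tan θ`, the product rule gives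
`β' = r • Y' + tan θ • β`. A curve on a sphere is orthogonal to its velocity, so `r • Y'` and `β`
are orthogonal, both of length `|r|`, and `1 + tan² θ = sec² θ` gives `‖β'‖ = |r| / |cos θ|`. The
component of `β` orthogonal to `β'` has length `|r| * |cos θ| = |c|`, since `β'` is at angle `θ`
from the normal direction `r • Y'` to `β`.
-/

theorem hasDerivAt_const_div_cos_add (c t₀ : ℝ) {t : ℝ} (ht : cos (t + t₀) ≠ 0) :
    HasDerivAt (fun u => c / cos (u + t₀)) (tan (t + t₀) * (c / cos (t + t₀))) t := by
  have hcos : HasDerivAt (fun u => cos (u + t₀)) (-sin (t + t₀)) t :=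
    (hasDerivAt_cos (t + t₀)).comp_add_const t t₀
  refine ((hasDerivAt_const t c).fun_div hcos ht).congr_deriv ?_
  rw [tan_eq_sin_div_cos]
  ring

theorem hasDerivAt_const_div_cos_add_smul {F : Type*} [NormedAddCommGroup F] [NormedSpace ℝ F]
    (c t₀ : ℝ) {t : ℝ} {Y : ℝ → F} {y' : F} (hY : HasDerivAt Y y' t) (ht : cos (t + t₀) ≠ 0) :
    HasDerivAt (fun u => (c / cos (u + t₀)) • Y u)
      ((c / cos (t + t₀)) • y' + tan (t + t₀) • (c / cos (t + t₀)) • Y t) t :=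
  ((hasDerivAt_const_div_cos_add c t₀ ht).fun_smul hY).congr_deriv (by rw [mul_smul])

section InnerProductSpace

variable {E : Type*} [NormedAddCommGroup E] [InnerProductSpace ℝ E]

theorem inner_eq_zero_of_hasDerivAt_of_eventually_norm_eq {Y : ℝ → E} {y' : E} {t r : ℝ}
    (hderiv : HasDerivAt Y y' t) (hnorm : ∀ᶠ u in nhds t, ‖Y u‖ = r) : ⟪Y t, y'⟫ = 0 := by
  have hconst : HasDerivAt (fun u => ‖Y u‖ ^ 2) 0 t :=
    (hasDerivAt_const t (r ^ 2)).congr_of_eventuallyEq (hnorm.mono fun u hu => by simp only [hu])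
  have htwo : 2 * ⟪Y t, y'⟫ = 0 := hderiv.norm_sq.unique hconst
  linarith

variable {x y : E} {θ : ℝ}

theorem norm_add_tan_smul_of_inner_eq_zero (horth : ⟪x, y⟫ = 0) (hnorm : ‖y‖ = ‖x‖)
    (hθ : cos θ ≠ 0) : ‖y + tan θ • x‖ = ‖x‖ / |cos θ| := by
  have horth' : ⟪y, tan θ • x⟫ = 0 := by
    rw [real_inner_smul_right, real_inner_comm, horth, mul_zero]
  refine (sq_eq_sq₀ (norm_nonneg _) (by positivity)).mp ?_
  calc ‖y + tan θ • x‖ ^ 2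
      = ‖x‖ ^ 2 * (1 + tan θ ^ 2) := by
        rw [norm_add_sq_real, horth', norm_smul, hnorm, mul_pow, norm_eq_abs, sq_abs]
        ring
    _ = (‖x‖ / |cos θ|) ^ 2 := by
        rw [div_pow, sq_abs, ← inv_one_add_tan_sq hθ, div_inv_eq_mul]

theorem norm_sq_sub_inner_sq_div_norm_sq_add_tan_smul (horth : ⟪x, y⟫ = 0) (hnorm : ‖y‖ = ‖x‖)
    (hx : x ≠ 0) (hθ : cos θ ≠ 0) :
    ‖x‖ ^ 2 - ⟪x, y + tan θ • x⟫ ^ 2 / ‖y + tan θ • x‖ ^ 2 = (‖x‖ * cos θ) ^ 2 := by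
  have hinner : ⟪x, y + tan θ • x⟫ = tan θ * ‖x‖ ^ 2 := by
    rw [inner_add_right, horth, real_inner_smul_right, real_inner_self_eq_norm_sq, zero_add]
  have hx' : ‖x‖ ≠ 0 := norm_ne_zero_iff.mpr hx
  calc ‖x‖ ^ 2 - ⟪x, y + tan θ • x⟫ ^ 2 / ‖y + tan θ • x‖ ^ 2
      = ‖x‖ ^ 2 - (tan θ * cos θ) ^ 2 * ‖x‖ ^ 2 := by
        rw [hinner, norm_add_tan_smul_of_inner_eq_zero horth hnorm hθ, div_pow, sq_abs]
        field_simp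
    _ = (‖x‖ * cos θ) ^ 2 := by
        rw [tan_mul_cos hθ, sin_sq]
        ring

theorem stmt_14_general {c t₀ t : ℝ} (hc : c ≠ 0) {Y : ℝ → E} {y' : E}
    (hY : ∀ᶠ u in nhds t, ‖Y u‖ = 1) (hY' : HasDerivAt Y y' t) (hy' : ‖y'‖ = 1)
    (ht : cos (t + t₀) ≠ 0) :
    ∃ v : E,
      HasDerivAt (fun u => (c / cos (u + t₀)) • Y u) v t ∧
      ‖v‖ = |c| / cos (t + t₀) ^ 2 ∧
      ‖(c / cos (t + t₀)) • Y t‖ ^ 2 -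
        ⟪(c / cos (t + t₀)) • Y t, v⟫ ^ 2 / ‖v‖ ^ 2 = c ^ 2 := by
  have horth : ⟪(c / cos (t + t₀)) • Y t, (c / cos (t + t₀)) • y'⟫ = 0 := by
    rw [real_inner_smul_left, real_inner_smul_right,
      inner_eq_zero_of_hasDerivAt_of_eventually_norm_eq hY' hY, mul_zero, mul_zero]
  have hnorm : ‖(c / cos (t + t₀)) • Y t‖ = |c| / |cos (t + t₀)| := by
    rw [norm_smul, hY.self_of_nhds, mul_one, norm_eq_abs, abs_div]
  have hnorm_eq : ‖(c / cos (t + t₀)) • y'‖ = ‖(c / cos (t + t₀)) • Y t‖ := by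
    rw [norm_smul, norm_smul, hy', hY.self_of_nhds]
  have hne : (c / cos (t + t₀)) • Y t ≠ 0 := by
    rw [← norm_ne_zero_iff, hnorm]
    positivity
  refine ⟨_, hasDerivAt_const_div_cos_add_smul c t₀ hY' ht, ?_, ?_⟩
  · rw [norm_add_tan_smul_of_inner_eq_zero horth hnorm_eq ht, hnorm, div_div, abs_mul_abs_self, sq]
  · rw [norm_sq_sub_inner_sq_div_norm_sq_add_tan_smul horth hnorm_eq hne ht, hnorm, mul_pow,
      div_pow, sq_abs, sq_abs, div_mul_cancel₀ _ (pow_ne_zero 2 ht)]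

end InnerProductSpace

theorem stmt_14
    (c t₀ : ℝ) (hc : 0 < c)
    (Y Y' : ℝ → EuclideanSpace ℝ (Fin 3))
    (hY : ∀ t, ‖Y t‖ = 1)
    (hY' : ∀ t, HasDerivAt Y (Y' t) t)
    (hY'unit : ∀ t, ‖Y' t‖ = 1) :
    ∀ t, Real.cos (t + t₀) > 0 →
      ∃ v : EuclideanSpace ℝ (Fin 3),
        HasDerivAt (fun u => (c / Real.cos (u + t₀)) • Y u) v t ∧
        ‖v‖ = c / Real.cos (t + t₀) ^ 2 ∧
        ‖(c / Real.cos (t + t₀)) • Y t‖ ^ 2 -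
          (⟪(c / Real.cos (t + t₀)) • Y t, v⟫) ^ 2 / ‖v‖ ^ 2 = c ^ 2 := by
  intro t ht
  simpa only [abs_of_pos hc] using
    stmt_14_general hc.ne' (.of_forall hY) (hY' t) (hY'unit t) ht.ne'
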